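/- Let a, b, c, d be four points in the hyperbolic plane such that the geodesic segments [a,b] and [c,d] are non-degenerate and disjoint. Then the function p ↦ dist(p, [c,d])² is strictly convex along [a,b]; i.e., for the arc-length parameterization α of [a,b], t ↦ dist(α(t), [c,d])² has positive second difference quotients. -/

import Mathlib

/-! Statement 0: For disjoint non-degenerate geodesic segments [a,b] and [c,d] in the
hyperbolic plane, p ↦ dist(p,[c,d])² is strictly convex along [a,b]. -/

open Metric Set

local notation "ℍ" => UpperHalfPlane

/-- A unit-speed (arc-length) geodesic parameterization on a set of times. -/
def IsUnitSpeedGeodesicOn (α : ℝ → ℍ) (I : Set ℝ) : Prop :=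
  ∀ s ∈ I, ∀ t ∈ I, dist (α s) (α t) = |s - t|

/-!
Let `r = dist p K > 0` be attained at `y₀`. Convexity of `K` puts it beyond the line through `y₀`
perpendicular to `[p, y₀]`, so `dist (·, K)` is bounded below by the distance to that line, with
equality at `p`. In the hyperboloid model `sinh` of the latter is, along a unit-speed geodesic, a
solution of `u'' = u`. For `v = arsinh ∘ u` this gives `v'' = tanh v (1 - v'²)` with `|v'| ≤ 1`,
hence `(v²)'' = 2 (v'² + v tanh v (1 - v'²)) ≥ 2 min 1 (v tanh v)`, so that `dist (·, K)²` is
supported from below at each point by a uniformly strongly convex function, and this local property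
implies strong convexity.
-/

section

open Real Filter Topology

/-! ### Strong convexity from local supports -/

theorem exists_mem_Ioo_isMaxOn {g : ℝ → ℝ} {x y z : ℝ} (hg : ContinuousOn g (Icc x y))
    (hz : z ∈ Ioo x y) (hx : g x ≤ g z) (hy : g y ≤ g z) :
    ∃ t ∈ Ioo x y, IsMaxOn g (Icc x y) t := by
  obtain ⟨t, ht, hmax⟩ := isCompact_Icc.exists_isMaxOn ⟨z, Ioo_subset_Icc_self hz⟩ hg
  rcases eq_endpoints_or_mem_Ioo_of_mem_Icc ht with rfl | rfl | ht
  · exact ⟨z, hz, fun u hu ↦ (hmax hu).trans hx⟩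
  · exact ⟨z, hz, fun u hu ↦ (hmax hu).trans hy⟩
  · exact ⟨t, ht, hmax⟩

theorem strictConvexOn_of_eventually_lt {s : Set ℝ} (hs : Convex ℝ s) {f : ℝ → ℝ}
    (hf : ContinuousOn f s)
    (hsupp : ∀ t ∈ interior s, ∃ m, ∀ᶠ u in 𝓝[≠] t, f t + m * (u - t) < f u) :
    StrictConvexOn ℝ s f := by
  refine LinearOrder.strictConvexOn_of_lt hs fun x hx y hy hxy p q hp hq hpq ↦ ?_
  by_contra! hle
  have hxys : Icc x y ⊆ s := hs.ordConnected.out hx hy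
  set σ := (f y - f x) / (y - x)
  have hσxy : σ * (y - x) = f y - f x := div_mul_cancel₀ _ (sub_pos.2 hxy).ne'
  -- The difference `g` between `f` and its chord would have an interior maximum.
  set g : ℝ → ℝ := fun u ↦ f u - f x - σ * (u - x) with hg
  have hgx : g x = 0 := by simp [hg]
  have hgy : g y = 0 := by simp [hg, hσxy]
  have hgc : ContinuousOn g (Icc x y) := by
    have := hf.mono hxys
    fun_prop
  obtain ⟨z, hz, hgz⟩ : ∃ z ∈ Ioo x y, 0 ≤ g z := by
    obtain rfl : p = 1 - q := by linarith
    refine ⟨(1 - q) • x + q • y, ?_, ?_⟩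
    · constructor <;> simp only [smul_eq_mul] <;> nlinarith
    · simp only [hg, smul_eq_mul] at hle ⊢
      linear_combination hle + q * hσxy
  obtain ⟨t, ht, hmax⟩ := exists_mem_Ioo_isMaxOn hgc hz (hgx.trans_le hgz) (hgy.trans_le hgz)
  obtain ⟨m, hm⟩ := hsupp t (interior_mono hxys (by rwa [interior_Icc]))
  have hslope : ∀ᶠ u in 𝓝[≠] t, (m - σ) * (u - t) < 0 := by
    filter_upwards [hm, nhdsWithin_le_nhds (Icc_mem_nhds ht.1 ht.2)] with u hu hu'
    have := isMaxOn_iff.1 hmax u hu'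
    simp only [hg] at this
    linarith
  obtain ⟨u, hu, hut⟩ := ((hslope.filter_mono (nhdsGT_le_nhdsNE t)).and self_mem_nhdsWithin).exists
  obtain ⟨v, hv, hvt⟩ := ((hslope.filter_mono (nhdsLT_le_nhdsNE t)).and self_mem_nhdsWithin).exists
  have := neg_of_mul_neg_left hu (sub_pos.2 hut).le
  nlinarith [sub_neg.2 (show v < t from hvt)]

theorem strongConvexOn_of_eventually_lt {s : Set ℝ} (hs : Convex ℝ s) {f : ℝ → ℝ} {c : ℝ}
    (hf : ContinuousOn f s)
    (hsupp : ∀ t ∈ interior s, ∃ m, ∀ᶠ u in 𝓝[≠] t,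
      f t + m * (u - t) + c / 2 * (u - t) ^ 2 < f u) :
    StrongConvexOn s c f := by
  rw [strongConvexOn_iff_convex]
  refine (strictConvexOn_of_eventually_lt hs (by fun_prop) fun t ht ↦ ?_).convexOn
  obtain ⟨m, hm⟩ := hsupp t ht
  refine ⟨m - c * t, hm.mono fun u hu ↦ ?_⟩
  simp only [norm_eq_abs, sq_abs]
  linear_combination hu

theorem mul_sq_le_second_difference_of_strongConvexOn {s : Set ℝ} {f : ℝ → ℝ} {c t ε : ℝ}
    (hf : StrongConvexOn s c f) (hsub : t - ε ∈ s) (hadd : t + ε ∈ s) :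
    c * ε ^ 2 ≤ f (t + ε) + f (t - ε) - 2 * f t := by
  obtain ⟨-, hconv⟩ := hf
  have h := hconv hsub hadd one_half_pos.le one_half_pos.le (add_halves 1)
  have hmid : (1 / 2 : ℝ) • (t - ε) + (1 / 2 : ℝ) • (t + ε) = t := by
    simp only [smul_eq_mul]; ring
  rw [hmid] at h
  simp only [norm_eq_abs, sq_abs, smul_eq_mul] at h
  linear_combination 2 * h

theorem eventually_taylor_two_lt {f f' : ℝ → ℝ} {x m c : ℝ}
    (hf : ∀ᶠ y in 𝓝 x, HasDerivAt f (f' y) y) (hf' : HasDerivAt f' m x) (hc : c < m) :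
    ∀ᶠ y in 𝓝[≠] x, f x + f' x * (y - x) + c / 2 * (y - x) ^ 2 < f y := by
  obtain ⟨e, hce, hem⟩ := exists_between hc
  set g : ℝ → ℝ := fun y ↦ f y - f' x * (y - x) - e / 2 * (y - x) ^ 2 with hg
  have hderiv : deriv g =ᶠ[𝓝 x] fun y ↦ f' y - f' x - e * (y - x) := by
    filter_upwards [hf] with y hy
    have hid : HasDerivAt (fun y : ℝ ↦ y - x) 1 y := (hasDerivAt_id y).sub_const x
    refine ((hy.sub (hid.const_mul (f' x))).sub ((hid.pow 2).const_mul (e / 2))).deriv.trans ?_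
    norm_num
    ring
  have hderiv2 : deriv (deriv g) x = m - e := by
    rw [hderiv.deriv_eq]
    exact ((hf'.sub_const _).sub
      (((hasDerivAt_id x).sub_const x).const_mul e)).deriv.trans (by simp)
  have hmin : IsLocalMin g x := by
    refine isLocalMin_of_deriv_deriv_pos (by rw [hderiv2]; linarith)
      (by rw [hderiv.eq_of_nhds]; simp) ?_
    have := hf.self_of_nhds.continuousAt
    fun_prop
  filter_upwards [nhdsWithin_le_nhds hmin, self_mem_nhdsWithin] with y hy hyx
  have : 0 < (y - x) ^ 2 := by
    have := sub_ne_zero.2 hyx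
    positivity
  simp only [hg, sub_self] at hy
  nlinarith

/-! ### Squared distance to a line as a function on a geodesic -/

theorem tanh_strictMono : StrictMono tanh := fun x y h ↦ by
  rwa [← artanh_lt_artanh_iff (tanh_bijOn.mapsTo (mem_univ x)) (tanh_bijOn.mapsTo (mem_univ y)),
    artanh_tanh, artanh_tanh]

theorem hasDerivAt_div_sqrt_one_add_sq {u u' : ℝ → ℝ} {x : ℝ}
    (hu : HasDerivAt u (u' x) x) (hu' : HasDerivAt u' (u x) x) :
    HasDerivAt (fun y ↦ u' y / √(1 + u y ^ 2))
      (tanh (arsinh (u x)) * (1 - (u' x / √(1 + u x ^ 2)) ^ 2)) x := by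
  have hpos : 0 < 1 + u x ^ 2 := by positivity
  have hsqrt : HasDerivAt (fun y ↦ √(1 + u y ^ 2)) (u x * u' x / √(1 + u x ^ 2)) x :=
    (((hu.pow 2).const_add 1).sqrt hpos.ne').congr_deriv (by simp only [Pi.pow_apply]; field)
  refine (hu'.div hsqrt (by positivity)).congr_deriv ?_
  rw [tanh_arsinh]
  field

theorem eventually_quadratic_lt_arsinh_sq {u u' : ℝ → ℝ} {x c : ℝ}
    (hu : ∀ᶠ y in 𝓝 x, HasDerivAt u (u' y) y)
    (hu' : HasDerivAt u' (u x) x) (hslope : u' x ^ 2 ≤ 1 + u x ^ 2)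
    (hc : c < 2 * min 1 (arsinh (u x) * tanh (arsinh (u x)))) :
    ∃ m, ∀ᶠ y in 𝓝[≠] x,
      arsinh (u x) ^ 2 + m * (y - x) + c / 2 * (y - x) ^ 2 < arsinh (u y) ^ 2 := by
  set v' : ℝ → ℝ := fun y ↦ u' y / √(1 + u y ^ 2)
  have hv : ∀ᶠ y in 𝓝 x, HasDerivAt (fun y ↦ arsinh (u y)) (v' y) y :=
    hu.mono fun y hy ↦ hy.arsinh.congr_deriv (inv_mul_eq_div _ _)
  have hv' := hasDerivAt_div_sqrt_one_add_sq hu.self_of_nhds hu'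
  have hv'_sq : v' x ^ 2 ≤ 1 := by
    rw [div_pow, sq_sqrt (by positivity)]
    exact div_le_one_of_le₀ hslope (by positivity)
  refine ⟨_, eventually_taylor_two_lt (f := fun y ↦ arsinh (u y) ^ 2)
    (f' := fun y ↦ 2 * arsinh (u y) * v' y) (hv.mono fun y hy ↦ (hy.pow 2).congr_deriv (by simp))
    ((hv.self_of_nhds.const_mul 2).mul hv') (hc.trans_le ?_)⟩
  -- The second derivative `2 (v'² + v tanh v (1 - v'²))` averages `2` and `2 v tanh v`.
  have h1 := min_le_left 1 (arsinh (u x) * tanh (arsinh (u x)))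
  have h2 := min_le_right 1 (arsinh (u x) * tanh (arsinh (u x)))
  linear_combination 2 * (v' x ^ 2) * h1 + 2 * (1 - v' x ^ 2) * h2

theorem eventually_quadratic_lt_sq_of_sinh_support {f : ℝ → ℝ} {t₀ k c : ℝ} (hpos : 0 < f t₀)
    (hk : |k| ≤ cosh (f t₀)) (hc : c < 2 * min 1 (f t₀ * tanh (f t₀)))
    (hsupp : ∀ᶠ t in 𝓝 t₀, sinh (f t₀) * cosh (t - t₀) + k * sinh (t - t₀) ≤ sinh (f t)) :
    ∃ m, ∀ᶠ t in 𝓝[≠] t₀, f t₀ ^ 2 + m * (t - t₀) + c / 2 * (t - t₀) ^ 2 < f t ^ 2 := by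
  set u : ℝ → ℝ := fun t ↦ sinh (f t₀) * cosh (t - t₀) + k * sinh (t - t₀) with hu_def
  set u' : ℝ → ℝ := fun t ↦ sinh (f t₀) * sinh (t - t₀) + k * cosh (t - t₀) with hu'_def
  have hsub (t : ℝ) : HasDerivAt (fun t ↦ t - t₀) 1 t := (hasDerivAt_id t).sub_const t₀
  have hu (t) : HasDerivAt u (u' t) t :=
    (((hsub t).cosh.const_mul _).add ((hsub t).sinh.const_mul _)).congr_deriv (by simp [hu'_def])
  have hu' (t) : HasDerivAt u' (u t) t :=
    (((hsub t).sinh.const_mul _).add ((hsub t).cosh.const_mul _)).congr_deriv (by simp [hu_def])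
  have hu₀ : u t₀ = sinh (f t₀) := by simp [hu_def]
  have hslope : u' t₀ ^ 2 ≤ 1 + u t₀ ^ 2 := by
    rw [hu₀, ← cosh_sq', show u' t₀ = k by simp [hu'_def]]
    exact sq_le_sq' (abs_le.1 hk).1 (abs_le.1 hk).2
  obtain ⟨m, hm⟩ := eventually_quadratic_lt_arsinh_sq (.of_forall hu) (hu' t₀) hslope
    (by rwa [hu₀, arsinh_sinh])
  have hu_pos : ∀ᶠ t in 𝓝 t₀, 0 < u t :=
    (hu t₀).continuousAt.eventually (lt_mem_nhds (hu₀ ▸ sinh_pos_iff.2 hpos))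
  refine ⟨m, ?_⟩
  filter_upwards [hm, nhdsWithin_le_nhds hu_pos, nhdsWithin_le_nhds hsupp] with t ht ht_pos hle
  rw [hu₀, arsinh_sinh] at ht
  refine ht.trans_le (pow_le_pow_left₀ (arsinh_nonneg_iff.2 ht_pos.le) ?_ 2)
  rwa [← arsinh_sinh (f t), arsinh_le_arsinh]

theorem strongConvexOn_sq_of_sinh_support {s : Set ℝ} {f : ℝ → ℝ} {c δ : ℝ} (hs : Convex ℝ s)
    (hf : ContinuousOn f s) (hδ : 0 < δ) (hδf : ∀ t ∈ s, δ ≤ f t)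
    (hc : c < 2 * min 1 (δ * tanh δ))
    (hsupp : ∀ t₀ ∈ interior s, ∃ k, |k| ≤ cosh (f t₀) ∧ ∀ t ∈ s,
      sinh (f t₀) * cosh (t - t₀) + k * sinh (t - t₀) ≤ sinh (f t)) :
    StrongConvexOn s c (fun t ↦ f t ^ 2) := by
  refine strongConvexOn_of_eventually_lt hs (by fun_prop) fun t₀ ht₀ ↦ ?_
  obtain ⟨k, hk, hle⟩ := hsupp t₀ ht₀
  have hδ₀ : δ ≤ f t₀ := hδf t₀ (interior_subset ht₀)
  have htanh : δ * tanh δ ≤ f t₀ * tanh (f t₀) :=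
    mul_le_mul hδ₀ (tanh_strictMono.monotone hδ₀) (by simpa using (tanh_strictMono hδ).le)
      (hδ.le.trans hδ₀)
  refine eventually_quadratic_lt_sq_of_sinh_support (hδ.trans_le hδ₀) hk
    (hc.trans_le (by gcongr)) ?_
  filter_upwards [mem_interior_iff_mem_nhds.1 ht₀] with t ht using hle t ht

/-! ### The hyperboloid model -/

/-- The Lorentz form of signature `(1, 2)` on `ℝ³`, positive on timelike vectors, in coordinates
where its timelike plane is spanned by two null vectors. -/
noncomputable def lorentzForm : LinearMap.BilinForm ℝ (Fin 3 → ℝ) :=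
  LinearMap.mk₂ ℝ (fun v w ↦ (v 0 * w 2 + v 2 * w 0) / 2 - v 1 * w 1)
    (fun _ _ _ ↦ by simp only [Pi.add_apply]; ring)
    (fun _ _ _ ↦ by simp only [Pi.smul_apply, smul_eq_mul]; ring)
    (fun _ _ _ ↦ by simp only [Pi.add_apply]; ring)
    (fun _ _ _ ↦ by simp only [Pi.smul_apply, smul_eq_mul]; ring)

theorem lorentzForm_apply (v w : Fin 3 → ℝ) :
    lorentzForm v w = (v 0 * w 2 + v 2 * w 0) / 2 - v 1 * w 1 := rfl

theorem lorentzForm_comm (v w : Fin 3 → ℝ) : lorentzForm v w = lorentzForm w v := by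
  simp only [lorentzForm_apply]; ring

theorem det_lorentzForm_gram (v : Fin 3 → Fin 3 → ℝ) :
    (Matrix.of fun i j ↦ lorentzForm (v i) (v j)).det = ((Matrix.of v).det / 2) ^ 2 := by
  simp only [Matrix.det_fin_three, Matrix.of_apply, lorentzForm_apply]
  ring

theorem lorentzForm_gram_nonneg (u v w : Fin 3 → ℝ) :
    0 ≤ lorentzForm u u * lorentzForm v v * lorentzForm w w
      + 2 * lorentzForm u v * lorentzForm v w * lorentzForm u w
      - lorentzForm u u * lorentzForm v w ^ 2 - lorentzForm v v * lorentzForm u w ^ 2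
      - lorentzForm w w * lorentzForm u v ^ 2 := by
  have h : 0 ≤ (Matrix.of fun i j ↦ lorentzForm (![u, v, w] i) (![u, v, w] j)).det := by
    rw [det_lorentzForm_gram]
    positivity
  simp only [Matrix.det_fin_three, Matrix.of_apply, Matrix.cons_val, lorentzForm_comm v u,
    lorentzForm_comm w u, lorentzForm_comm w v] at h
  linear_combination h

theorem separatingLeft_lorentzForm : lorentzForm.SeparatingLeft := fun v h ↦ by
  have h0 : v 0 = 0 := by simpa [lorentzForm_apply] using h ![0, 0, 1]
  have h1 : v 1 = 0 := by simpa [lorentzForm_apply] using h ![0, 1, 0]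
  have h2 : v 2 = 0 := by simpa [lorentzForm_apply] using h ![1, 0, 0]
  ext i
  fin_cases i <;> assumption

theorem eq_zero_of_lorentzForm_eq_zero {p v : Fin 3 → ℝ} (hp : 0 < lorentzForm p p)
    (hpv : lorentzForm p v = 0) (hv : lorentzForm v v = 0) : v = 0 := by
  refine separatingLeft_lorentzForm v fun w ↦ ?_
  have h := lorentzForm_gram_nonneg p v w
  rw [hpv, hv] at h
  have : lorentzForm p p * lorentzForm v w ^ 2 ≤ 0 := by linear_combination h
  exact pow_eq_zero_iff two_ne_zero |>.1
    (le_antisymm (nonpos_of_mul_nonpos_right this hp) (sq_nonneg _))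

/-- The isometric embedding of the upper half-plane onto the upper sheet of the hyperboloid
`lorentzForm v v = 1`. -/
noncomputable def toHyperboloid (z : ℍ) : Fin 3 → ℝ :=
  ![1 / z.im, z.re / z.im, (z.re ^ 2 + z.im ^ 2) / z.im]

theorem lorentzForm_toHyperboloid (z w : ℍ) :
    lorentzForm (toHyperboloid z) (toHyperboloid w) = cosh (dist z w) := by
  have := z.im_ne_zero
  have := w.im_ne_zero
  rw [UpperHalfPlane.cosh_dist']
  simp only [lorentzForm_apply, toHyperboloid, Matrix.cons_val]
  field

theorem lorentzForm_toHyperboloid_self (z : ℍ) :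
    lorentzForm (toHyperboloid z) (toHyperboloid z) = 1 := by
  simp [lorentzForm_toHyperboloid]

/-- The unit vector at `z`, tangent to the hyperboloid, pointing along the geodesic towards `x`
(zero if `x = z`). -/
noncomputable def unitTangent (z x : ℍ) : Fin 3 → ℝ :=
  (sinh (dist z x))⁻¹ • (toHyperboloid x - cosh (dist z x) • toHyperboloid z)

theorem toHyperboloid_eq_add_unitTangent (z x : ℍ) :
    toHyperboloid x = cosh (dist z x) • toHyperboloid z + sinh (dist z x) • unitTangent z x := by
  rcases eq_or_ne z x with rfl | h
  · simp
  · have hs : sinh (dist z x) ≠ 0 := (sinh_pos_iff.2 (dist_pos.2 h)).ne'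
    rw [unitTangent, smul_inv_smul₀ hs, add_sub_cancel]

theorem lorentzForm_toHyperboloid_unitTangent (z x : ℍ) :
    lorentzForm (toHyperboloid z) (unitTangent z x) = 0 := by
  simp [unitTangent, lorentzForm_toHyperboloid]

theorem lorentzForm_unitTangent_self {z x : ℍ} (h : z ≠ x) :
    lorentzForm (unitTangent z x) (unitTangent z x) = -1 := by
  have hs : sinh (dist z x) ≠ 0 := (sinh_pos_iff.2 (dist_pos.2 h)).ne'
  have hx := lorentzForm_toHyperboloid_self x
  rw [toHyperboloid_eq_add_unitTangent z x] at hx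
  simp only [map_add, map_smul, LinearMap.add_apply, LinearMap.smul_apply, smul_eq_mul,
    lorentzForm_toHyperboloid_self, lorentzForm_comm (unitTangent z x) (toHyperboloid z),
    lorentzForm_toHyperboloid_unitTangent] at hx
  refine mul_left_cancel₀ (pow_ne_zero 2 hs) ?_
  linear_combination hx - cosh_sq (dist z x)

theorem lorentzForm_toHyperboloid_unitTangent_eq (z x y : ℍ) :
    lorentzForm (toHyperboloid x) (unitTangent z y) =
      sinh (dist z x) * lorentzForm (unitTangent z x) (unitTangent z y) := by
  rw [toHyperboloid_eq_add_unitTangent z x]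
  simp [lorentzForm_toHyperboloid_unitTangent]

theorem neg_lorentzForm_le_sinh_dist {x y : ℍ} {n : Fin 3 → ℝ} (hn : lorentzForm n n = -1)
    (hy : 0 ≤ lorentzForm (toHyperboloid y) n) :
    -lorentzForm (toHyperboloid x) n ≤ sinh (dist x y) := by
  by_contra! hlt
  have hgram := lorentzForm_gram_nonneg (toHyperboloid x) (toHyperboloid y) n
  rw [lorentzForm_toHyperboloid_self, lorentzForm_toHyperboloid_self, hn,
    lorentzForm_toHyperboloid, cosh_sq] at hgram
  set ξ := lorentzForm (toHyperboloid x) n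
  set η := lorentzForm (toHyperboloid y) n
  have hs : 0 ≤ sinh (dist x y) := sinh_nonneg_iff.2 dist_nonneg
  have hξη : cosh (dist x y) * η * ξ ≤ 0 :=
    mul_nonpos_of_nonneg_of_nonpos (mul_nonneg (cosh_pos _).le hy) (by linarith)
  nlinarith [sq_nonneg η]

theorem abs_lorentzForm_le_cosh_dist {p y : ℍ} {v : Fin 3 → ℝ} (hpy : y ≠ p)
    (hv : lorentzForm v v = -1) (hpv : lorentzForm (toHyperboloid p) v = 0) :
    |lorentzForm v (unitTangent y p)| ≤ cosh (dist y p) := by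
  have hgram := lorentzForm_gram_nonneg (toHyperboloid p) v (unitTangent y p)
  rw [hv, hpv, lorentzForm_toHyperboloid_self, lorentzForm_toHyperboloid_unitTangent_eq,
    lorentzForm_unitTangent_self hpy] at hgram
  refine abs_le_of_sq_le_sq ?_ (cosh_pos _).le
  linear_combination hgram - cosh_sq (dist y p)

/-! ### Geodesics and geodesically convex sets -/

namespace IsUnitSpeedGeodesicOn

variable {α : ℝ → ℍ} {I : Set ℝ}

theorem lipschitzOnWith (hα : IsUnitSpeedGeodesicOn α I) : LipschitzOnWith 1 α I :=
  .of_dist_le_mul fun s hs t ht ↦ by simp [hα s hs t ht, Real.dist_eq]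

theorem cosh_dist (hα : IsUnitSpeedGeodesicOn α I) {s t : ℝ} (hs : s ∈ I) (ht : t ∈ I) :
    cosh (dist (α s) (α t)) = cosh (s - t) := by
  rw [hα s hs t ht, cosh_abs]

theorem injOn (hα : IsUnitSpeedGeodesicOn α I) : InjOn α I := fun s hs t ht hst ↦ by
  have := hα s hs t ht
  rwa [hst, dist_self, eq_comm, abs_eq_zero, sub_eq_zero] at this

theorem lorentzForm_unitTangent_toHyperboloid (hα : IsUnitSpeedGeodesicOn α I) {t₀ t₁ t : ℝ}
    (ht₀ : t₀ ∈ I) (ht₁ : t₁ ∈ I) (h : t₀ < t₁) (ht : t ∈ I) :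
    lorentzForm (unitTangent (α t₀) (α t₁)) (toHyperboloid (α t)) = -sinh (t - t₀) := by
  have hdist : dist (α t₀) (α t₁) = t₁ - t₀ := by
    rw [dist_comm, hα t₁ ht₁ t₀ ht₀, abs_of_pos (sub_pos.2 h)]
  have hs : sinh (t₁ - t₀) ≠ 0 := (sinh_pos_iff.2 (sub_pos.2 h)).ne'
  have hcosh : cosh (t - t₁) =
      cosh (t - t₀) * cosh (t₁ - t₀) - sinh (t - t₀) * sinh (t₁ - t₀) := by
    rw [← cosh_sub, sub_sub_sub_cancel_right]
  rw [lorentzForm_comm, unitTangent, hdist, map_smul, map_sub, map_smul,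
    lorentzForm_toHyperboloid, lorentzForm_toHyperboloid, hα.cosh_dist ht ht₁, hα.cosh_dist ht ht₀,
    hcosh, smul_eq_mul, smul_eq_mul]
  field

theorem toHyperboloid_eq (hα : IsUnitSpeedGeodesicOn α I) {t₀ t₁ t : ℝ} (ht₀ : t₀ ∈ I)
    (ht₁ : t₁ ∈ I) (h : t₀ < t₁) (ht : t ∈ I) :
    toHyperboloid (α t) =
      cosh (t - t₀) • toHyperboloid (α t₀) + sinh (t - t₀) • unitTangent (α t₀) (α t₁) := by
  set P := toHyperboloid (α t₀)
  set U := unitTangent (α t₀) (α t₁)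
  set X := toHyperboloid (α t)
  have hPP : lorentzForm P P = 1 := lorentzForm_toHyperboloid_self _
  have hPU : lorentzForm P U = 0 := lorentzForm_toHyperboloid_unitTangent _ _
  have hUU : lorentzForm U U = -1 := lorentzForm_unitTangent_self (hα.injOn.ne ht₀ ht₁ h.ne)
  have hXX : lorentzForm X X = 1 := lorentzForm_toHyperboloid_self _
  have hXP : lorentzForm X P = cosh (t - t₀) := by
    rw [lorentzForm_toHyperboloid, hα.cosh_dist ht ht₀]
  have hUX : lorentzForm U X = -sinh (t - t₀) :=
    hα.lorentzForm_unitTangent_toHyperboloid ht₀ ht₁ h ht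
  -- The difference of the two sides is a null vector orthogonal to `P`.
  refine sub_eq_zero.1 (eq_zero_of_lorentzForm_eq_zero (hPP.symm ▸ one_pos) ?_ ?_)
  · simp [hPP, hPU, lorentzForm_comm P X, hXP]
  · simp only [map_sub, map_add, map_smul, LinearMap.sub_apply, LinearMap.add_apply,
      LinearMap.smul_apply, smul_eq_mul, lorentzForm_comm P X, lorentzForm_comm X U,
      lorentzForm_comm U P, hXX, hXP, hUX, hPP, hPU, hUU]
    linear_combination -cosh_sq (t - t₀)

end IsUnitSpeedGeodesicOn

/-- A set containing, with any two of its points, a geodesic segment joining them. In the hyperbolic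
plane that segment is unique, so that this is the usual geodesic convexity. -/
def GeodesicallyConvex (K : Set ℍ) : Prop :=
  ∀ x ∈ K, ∀ y ∈ K, ∃ γ : ℝ → ℍ, IsUnitSpeedGeodesicOn γ (Icc 0 (dist x y)) ∧
    γ 0 = x ∧ γ (dist x y) = y ∧ MapsTo γ (Icc 0 (dist x y)) K

theorem IsUnitSpeedGeodesicOn.geodesicallyConvex_image {β : ℝ → ℍ} {J : Set ℝ}
    (hβ : IsUnitSpeedGeodesicOn β J) (hJ : Convex ℝ J) : GeodesicallyConvex (β '' J) := by
  rintro _ ⟨s, hs, rfl⟩ _ ⟨t, ht, rfl⟩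
  rw [hβ s hs t ht]
  have hJ' := hJ.ordConnected
  rcases le_total s t with hst | hts
  · have hmem : ∀ v ∈ Icc 0 |s - t|, s + v ∈ J := fun v hv ↦ by
      rw [abs_sub_comm, abs_of_nonneg (sub_nonneg.2 hst)] at hv
      exact hJ'.out hs ht ⟨by linarith [hv.1], by linarith [hv.2]⟩
    refine ⟨fun v ↦ β (s + v), fun v hv w hw ↦ ?_, by simp, ?_,
      fun v hv ↦ mem_image_of_mem β (hmem v hv)⟩
    · rw [hβ _ (hmem v hv) _ (hmem w hw), add_sub_add_left_eq_sub]
    · simp [abs_sub_comm s, abs_of_nonneg (sub_nonneg.2 hst)]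
  · have hmem : ∀ v ∈ Icc 0 |s - t|, s - v ∈ J := fun v hv ↦ by
      rw [abs_of_nonneg (sub_nonneg.2 hts)] at hv
      exact hJ'.out ht hs ⟨by linarith [hv.2], by linarith [hv.1]⟩
    refine ⟨fun v ↦ β (s - v), fun v hv w hw ↦ ?_, by simp, ?_,
      fun v hv ↦ mem_image_of_mem β (hmem v hv)⟩
    · rw [hβ _ (hmem v hv) _ (hmem w hw), sub_sub_sub_cancel_left, abs_sub_comm]
    · simp [abs_of_nonneg (sub_nonneg.2 hts)]

theorem nonneg_of_forall_le_mul_cosh_add_mul_sinh {A κ L : ℝ} (hL : 0 < L)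
    (h : ∀ s ∈ Ioc 0 L, A ≤ A * cosh s + κ * sinh s) : 0 ≤ κ := by
  -- Dividing by `2 sinh (s / 2)` leaves `0 ≤ A sinh (s / 2) + κ cosh (s / 2)`; let `s → 0`.
  have hlim : Tendsto (fun s ↦ A * sinh (s / 2) + κ * cosh (s / 2)) (𝓝[>] 0) (𝓝 κ) := by
    have : Continuous fun s ↦ A * sinh (s / 2) + κ * cosh (s / 2) := by fun_prop
    simpa using (this.tendsto 0).mono_left nhdsWithin_le_nhds
  refine ge_of_tendsto hlim ?_
  filter_upwards [Ioc_mem_nhdsGT hL] with s hs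
  have hsinh : 0 < sinh (s / 2) := sinh_pos_iff.2 (half_pos hs.1)
  have hle := h s hs
  obtain ⟨v, rfl⟩ : ∃ v, s = 2 * v := ⟨s / 2, by ring⟩
  rw [cosh_two_mul, sinh_two_mul, cosh_sq] at hle
  rw [mul_div_cancel_left₀ v two_ne_zero] at hsinh ⊢
  refine nonneg_of_mul_nonneg_right (?_ : 0 ≤ sinh v * _) hsinh
  linear_combination hle / 2

theorem lorentzForm_unitTangent_nonneg_of_isMinOn {K : Set ℍ} (hK : GeodesicallyConvex K)
    {p y₀ y : ℍ} (hy₀ : y₀ ∈ K) (hy : y ∈ K) (hmin : IsMinOn (dist p) K y₀) :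
    0 ≤ lorentzForm (unitTangent y₀ p) (unitTangent y₀ y) := by
  rcases eq_or_ne y₀ y with rfl | hne
  · simp [unitTangent]
  rcases eq_or_ne y₀ p with rfl | hp
  · simp [unitTangent]
  have hL : 0 < dist y₀ y := dist_pos.2 hne
  obtain ⟨γ, hγ, hγ0, hγL, hγK⟩ := hK y₀ hy₀ y hy
  set W := unitTangent y₀ y with hW
  have h0 : 0 ∈ Icc 0 (dist y₀ y) := left_mem_Icc.2 hL.le
  have hγ_dist : ∀ s ∈ Icc 0 (dist y₀ y), cosh (dist p (γ s)) =
      cosh (dist p y₀) * cosh s + lorentzForm (toHyperboloid p) W * sinh s := fun s hs ↦ by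
    have hγs := hγ.toHyperboloid_eq h0 (right_mem_Icc.2 hL.le) hL hs
    rw [hγ0, hγL, sub_zero, ← hW] at hγs
    rw [← lorentzForm_toHyperboloid, hγs, map_add, map_smul, map_smul, smul_eq_mul, smul_eq_mul,
      lorentzForm_toHyperboloid]
    ring
  have hpW : 0 ≤ lorentzForm (toHyperboloid p) W := by
    refine nonneg_of_forall_le_mul_cosh_add_mul_sinh (A := cosh (dist p y₀)) hL
      fun s hs ↦ ?_
    rw [← hγ_dist s (Ioc_subset_Icc_self hs), cosh_le_cosh, abs_of_nonneg dist_nonneg,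
      abs_of_nonneg dist_nonneg]
    exact hmin (hγK (Ioc_subset_Icc_self hs))
  rw [lorentzForm_toHyperboloid_unitTangent_eq] at hpW
  exact nonneg_of_mul_nonneg_right hpW (sinh_pos_iff.2 (dist_pos.2 hp))

theorem IsUnitSpeedGeodesicOn.exists_sinh_infDist_support {α : ℝ → ℍ} {I : Set ℝ} {K : Set ℍ}
    (hα : IsUnitSpeedGeodesicOn α I) (hK : GeodesicallyConvex K) (hKc : IsClosed K)
    (hKne : K.Nonempty) {t₀ t₁ : ℝ} (ht₀ : t₀ ∈ I) (ht₁ : t₁ ∈ I) (h : t₀ < t₁)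
    (hpos : 0 < infDist (α t₀) K) :
    ∃ k, |k| ≤ cosh (infDist (α t₀) K) ∧ ∀ t ∈ I,
      sinh (infDist (α t₀) K) * cosh (t - t₀) + k * sinh (t - t₀) ≤ sinh (infDist (α t) K) := by
  obtain ⟨y₀, hy₀, hdist₀⟩ := hKc.exists_infDist_eq_dist hKne (α t₀)
  have hmin : IsMinOn (dist (α t₀)) K y₀ := fun y hy ↦ hdist₀ ▸ infDist_le_dist_of_mem hy
  rw [hdist₀, dist_comm] at hpos ⊢
  have hne : y₀ ≠ α t₀ := dist_pos.1 hpos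
  set n := unitTangent y₀ (α t₀)
  set U := unitTangent (α t₀) (α t₁)
  refine ⟨-lorentzForm U n, ?_, fun t ht ↦ ?_⟩
  · rw [abs_neg]
    exact abs_lorentzForm_le_cosh_dist hne
      (lorentzForm_unitTangent_self (hα.injOn.ne ht₀ ht₁ h.ne))
      (lorentzForm_toHyperboloid_unitTangent _ _)
  · obtain ⟨y, hy, hdist⟩ := hKc.exists_infDist_eq_dist hKne (α t)
    have hyn : 0 ≤ lorentzForm (toHyperboloid y) n := by
      rw [lorentzForm_toHyperboloid_unitTangent_eq, lorentzForm_comm]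
      exact mul_nonneg (sinh_nonneg_iff.2 dist_nonneg)
        (lorentzForm_unitTangent_nonneg_of_isMinOn hK hy₀ hy hmin)
    have hline := neg_lorentzForm_le_sinh_dist (x := α t) (lorentzForm_unitTangent_self hne) hyn
    rw [hα.toHyperboloid_eq ht₀ ht₁ h ht, map_add, map_smul, map_smul, LinearMap.add_apply,
      LinearMap.smul_apply, LinearMap.smul_apply, lorentzForm_toHyperboloid_unitTangent_eq,
      lorentzForm_unitTangent_self hne, smul_eq_mul, smul_eq_mul] at hline
    rw [hdist]
    linear_combination hline

theorem IsUnitSpeedGeodesicOn.strongConvexOn_infDist_sq {α : ℝ → ℍ} {I : Set ℝ} {K : Set ℍ}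
    {c δ : ℝ} (hα : IsUnitSpeedGeodesicOn α I) (hI : Convex ℝ I) (hK : GeodesicallyConvex K)
    (hKc : IsClosed K) (hKne : K.Nonempty) (hδ : 0 < δ) (hδK : ∀ t ∈ I, δ ≤ infDist (α t) K)
    (hc : c < 2 * min 1 (δ * tanh δ)) :
    StrongConvexOn I c (fun t ↦ infDist (α t) K ^ 2) := by
  have hcont : ContinuousOn (fun t ↦ infDist (α t) K) I :=
    (continuous_infDist_pt K).comp_continuousOn hα.lipschitzOnWith.continuousOn
  refine strongConvexOn_sq_of_sinh_support hI hcont hδ hδK hc fun t₀ ht₀ ↦ ?_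
  have ht₀I : t₀ ∈ I := interior_subset ht₀
  have hI_nhds : ∀ᶠ t in 𝓝[>] t₀, t ∈ I :=
    nhdsWithin_le_nhds (mem_interior_iff_mem_nhds.1 ht₀)
  obtain ⟨t₁, ht₁, hlt⟩ := (hI_nhds.and self_mem_nhdsWithin).exists
  exact hα.exists_sinh_infDist_support hK hKc hKne ht₀I ht₁ hlt (hδ.trans_le (hδK t₀ ht₀I))

end

theorem stmt_0_general {α : ℝ → ℍ} {I : Set ℝ} {K : Set ℍ} (hα : IsUnitSpeedGeodesicOn α I)
    (hI : Convex ℝ I) (hIc : IsCompact I) (hK : GeodesicallyConvex K) (hKc : IsClosed K)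
    (hKne : K.Nonempty) (hdisj : Disjoint (α '' I) K) :
    ∃ C > 0, ∀ t ε : ℝ, 0 < ε → t - ε ∈ I → t + ε ∈ I →
      C * ε ^ 2 ≤ infDist (α (t + ε)) K ^ 2 + infDist (α (t - ε)) K ^ 2
        - 2 * infDist (α t) K ^ 2 := by
  have hcont : ContinuousOn (fun t ↦ infDist (α t) K) I :=
    (continuous_infDist_pt K).comp_continuousOn hα.lipschitzOnWith.continuousOn
  have hpos : ∀ t ∈ I, 0 < infDist (α t) K := fun t ht ↦
    (hKc.notMem_iff_infDist_pos hKne).1 (disjoint_left.1 hdisj (mem_image_of_mem α ht))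
  obtain ⟨δ, hδ, hδK⟩ := hIc.exists_forall_le' hcont hpos
  have htanh : 0 < Real.tanh δ := by simpa using tanh_strictMono hδ
  obtain ⟨C, hC, hCδ⟩ := exists_between (show 0 < 2 * min 1 (δ * Real.tanh δ) by positivity)
  exact ⟨C, hC, fun t ε _ hsub hadd ↦ mul_sq_le_second_difference_of_strongConvexOn
    (hα.strongConvexOn_infDist_sq hI hK hKc hKne hδ hδK hCδ) hsub hadd⟩

theorem stmt_0 (a b c d : ℍ) (α β : ℝ → ℍ) (T S : ℝ)
    (hT : 0 < T) (hS : 0 < S)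
    (hα : IsUnitSpeedGeodesicOn α (Icc 0 T)) (hα0 : α 0 = a) (hαT : α T = b)
    (hβ : IsUnitSpeedGeodesicOn β (Icc 0 S)) (hβ0 : β 0 = c) (hβS : β S = d)
    (hdisj : Disjoint (α '' Icc 0 T) (β '' Icc 0 S)) :
    ∃ C > 0, ∀ t ε : ℝ, 0 < ε → t - ε ∈ Icc 0 T → t + ε ∈ Icc 0 T →
      C * ε ^ 2 ≤ infDist (α (t + ε)) (β '' Icc 0 S) ^ 2
        + infDist (α (t - ε)) (β '' Icc 0 S) ^ 2
        - 2 * infDist (α t) (β '' Icc 0 S) ^ 2 := by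
  have hclosed := (isCompact_Icc.image_of_continuousOn hβ.lipschitzOnWith.continuousOn).isClosed
  exact stmt_0_general hα (convex_Icc 0 T) isCompact_Icc
    (hβ.geodesicallyConvex_image (convex_Icc 0 S)) hclosed ((nonempty_Icc.2 hS.le).image β) hdisj
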